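/- Let p ≥ 1 and −1 ≤ r ≤ p − 1 be real numbers, and set c(p) := p^p (p−1)^{1−p} (with the convention 0^0 = 1, so c(1) = 1). Then there exists a unique probability measure ν on ℝ whose support is contained in the interval [0, c(p)] and whose moments are the binomial numbers: ∫ x^n dν(x) = C(np + r, n) for every natural number n. -/

import Mathlib

open MeasureTheory Real

/-- Generalized binomial coefficient `C(a,n) = a(a-1)⋯(a-n+1)/n!`. -/
noncomputable def gbinom (a : ℝ) (n : ℕ) : ℝ :=
  (∏ i ∈ Finset.range n, (a - i)) / (n.factorial : ℝ)

/-!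
With `z = exp u` and conjugation symmetry, `C(a, n) = (2πi)⁻¹ ∮ z ^ a / (z - 1) ^ (n + 1) dz`
becomes `π⁻¹` times the imaginary part of an integral over a path in the strip `0 < Im u < π` from
the positive real axis to `Re u = -∞`, valid for `a - n > -1`. When `a = n p + r` the integrand is
`(z ^ p / (z - 1)) ^ n * z ^ r / (z - 1) dz`. For `p > 1` and `r > -1` the path is chosen so that
`z ^ p / (z - 1)` is real along it; the remaining factor then has nonnegative imaginary part, and
the integral is the `n`-th moment of the distribution of `z ^ p / (z - 1)` along the path. For
`p = 1` the measure is a beta distribution or a Dirac mass, and the measure for `r = -1` is a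
mixture of the one for `r = 0` with the Dirac mass at `0`. Uniqueness holds because the moments
determine the Taylor series at `0` of the complex moment generating function, which is entire.
-/

open Filter Set Topology ProbabilityTheory

section Gbinom

theorem gbinom_zero (a : ℝ) : gbinom a 0 = 1 := by simp [gbinom]

theorem gbinom_succ_right (a : ℝ) (n : ℕ) :
    gbinom a (n + 1) = (a - n) / (n + 1) * gbinom a n := by
  simp only [gbinom, Finset.prod_range_succ, Nat.factorial_succ]
  push_cast
  field_simp

theorem gbinom_succ_sub_one (a : ℝ) (n : ℕ) :
    gbinom a (n + 1) = a / (n + 1) * gbinom (a - 1) n := by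
  simp only [gbinom, Finset.prod_range_succ', Nat.factorial_succ, Nat.cast_zero, sub_zero,
    Nat.cast_succ, sub_add_eq_sub_sub_swap]
  push_cast
  field_simp

theorem gbinom_sub_one (a : ℝ) (n : ℕ) : a * gbinom (a - 1) n = (a - n) * gbinom a n := by
  have h := (gbinom_succ_sub_one a n).symm.trans (gbinom_succ_right a n)
  field_simp at h
  linarith

theorem gbinom_natCast_self (n : ℕ) : gbinom n n = 1 := by
  induction n with
  | zero => exact gbinom_zero _
  | succ n ih =>
    rw [gbinom_succ_sub_one, Nat.cast_succ, add_sub_cancel_right, ih]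
    field_simp

end Gbinom

section MomentMeasure

theorem measure_eq_of_forall_integral_pow_eq {μ ν : Measure ℝ} [IsFiniteMeasure μ]
    [IsFiniteMeasure ν] (hμ : 0 ∈ interior (integrableExpSet id μ))
    (hν : 0 ∈ interior (integrableExpSet id ν)) (h : ∀ n : ℕ, ∫ x, x ^ n ∂μ = ∫ x, x ^ n ∂ν) :
    μ = ν := by
  let strip (κ : Measure ℝ) : Set ℂ := {z | z.re ∈ interior (integrableExpSet id κ)}
  have near_zero : complexMGF id μ =ᶠ[𝓝 0] complexMGF id ν := by
    have hμ_sum := (analyticAt_complexMGF (z := 0) hμ).hasFPowerSeriesAt.eventually_hasSum_sub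
    have hν_sum := (analyticAt_complexMGF (z := 0) hν).hasFPowerSeriesAt.eventually_hasSum_sub
    have h_deriv (n : ℕ) : iteratedDeriv n (complexMGF id μ) 0 =
        iteratedDeriv n (complexMGF id ν) 0 := by
      rw [iteratedDeriv_complexMGF hμ, iteratedDeriv_complexMGF hν]
      simpa [← Complex.ofReal_pow, integral_complex_ofReal] using h n
    simp only [h_deriv] at hμ_sum
    filter_upwards [hμ_sum, hν_sum] with z using HasSum.unique
  have hconv : Convex ℝ (strip μ ∩ strip ν) :=
    (convex_integrableExpSet.interior.linear_preimage Complex.reLm).inter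
      (convex_integrableExpSet.interior.linear_preimage Complex.reLm)
  have on_strip : EqOn (complexMGF id μ) (complexMGF id ν) (strip μ ∩ strip ν) :=
    AnalyticOnNhd.eqOn_of_preconnected_of_eventuallyEq
      (analyticOnNhd_complexMGF.mono inter_subset_left)
      (analyticOnNhd_complexMGF.mono inter_subset_right) hconv.isPreconnected ⟨hμ, hν⟩ near_zero
  refine Measure.ext_of_charFun (funext fun t => ?_)
  rw [← complexMGF_id_mul_I, ← complexMGF_id_mul_I]
  exact on_strip ⟨by simpa [strip] using hμ, by simpa [strip] using hν⟩

/-- `ν` is a probability measure carried by `s` whose `n`-th moment is `m n` for every `n`. -/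
structure IsMomentMeasure (ν : Measure ℝ) (s : Set ℝ) (m : ℕ → ℝ) : Prop where
  isProbabilityMeasure : IsProbabilityMeasure ν
  measure_compl : ν sᶜ = 0
  integral_pow : ∀ n : ℕ, ∫ x, x ^ n ∂ν = m n

namespace IsMomentMeasure

variable {μ ν : Measure ℝ} {s : Set ℝ} {m k : ℕ → ℝ} {a b : ℝ}

theorem zero_mem_interior_integrableExpSet (h : IsMomentMeasure ν (Icc a b) m) :
    0 ∈ interior (integrableExpSet id ν) := by
  have := h.isProbabilityMeasure
  have huniv : integrableExpSet id ν = univ := eq_univ_of_forall fun t =>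
    integrable_exp_mul_of_mem_Icc aemeasurable_id (mem_ae_iff.2 h.measure_compl)
  simp [huniv]

theorem eq (hμ : IsMomentMeasure μ (Icc a b) m) (hν : IsMomentMeasure ν (Icc a b) m) :
    μ = ν := by
  have := hμ.isProbabilityMeasure
  have := hν.isProbabilityMeasure
  exact measure_eq_of_forall_integral_pow_eq hμ.zero_mem_interior_integrableExpSet
    hν.zero_mem_interior_integrableExpSet fun n => by rw [hμ.integral_pow, hν.integral_pow]

theorem dirac {x : ℝ} (hs : MeasurableSet s) (hx : x ∈ s) :
    IsMomentMeasure (Measure.dirac x) s fun n => x ^ n where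
  isProbabilityMeasure := inferInstance
  measure_compl := by simp [Measure.dirac_apply' _ hs.compl, hx]
  integral_pow n := integral_dirac _ _

theorem convexCombination (hμ : IsMomentMeasure μ (Icc a b) m)
    (hν : IsMomentMeasure ν (Icc a b) k) {t : ℝ} (ht : t ∈ Icc 0 1) :
    IsMomentMeasure (ENNReal.ofReal t • μ + ENNReal.ofReal (1 - t) • ν) (Icc a b)
      fun n => t * m n + (1 - t) * k n where
  isProbabilityMeasure := by
    have := hμ.isProbabilityMeasure
    have := hν.isProbabilityMeasure
    constructor
    simp [← ENNReal.ofReal_add ht.1 (sub_nonneg.2 ht.2)]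
  measure_compl := by simp [hμ.measure_compl, hν.measure_compl]
  integral_pow n := by
    have integrable_pow {κ : Measure ℝ} {l : ℕ → ℝ} (hκ : IsMomentMeasure κ (Icc a b) l) :
        Integrable (fun x => x ^ n) κ :=
      integrable_pow_of_mem_interior_integrableExpSet hκ.zero_mem_interior_integrableExpSet n
    rw [integral_add_measure ((integrable_pow hμ).smul_measure ENNReal.ofReal_ne_top)
        ((integrable_pow hν).smul_measure ENNReal.ofReal_ne_top),
      integral_smul_measure, integral_smul_measure, hμ.integral_pow, hν.integral_pow,
      ENNReal.toReal_ofReal ht.1, ENNReal.toReal_ofReal (sub_nonneg.2 ht.2),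
      smul_eq_mul, smul_eq_mul]

theorem map_withDensity {α : Type*} {mα : MeasurableSpace α} {κ : Measure α} {X ρ : α → ℝ}
    (hX : Measurable X) (hρ : Measurable ρ) (hρ_nonneg : 0 ≤ᵐ[κ] ρ) (hs : MeasurableSet s)
    (hXs : ∀ᵐ x ∂κ, ρ x ≠ 0 → X x ∈ s) (hm : m 0 = 1)
    (hint : ∀ n : ℕ, ∫ x, X x ^ n * ρ x ∂κ = m n) :
    IsMomentMeasure ((κ.withDensity fun x => ENNReal.ofReal (ρ x)).map X) s m where
  isProbabilityMeasure := by
    have hρ_int : ∫ x, ρ x ∂κ = 1 := by simpa [hm] using hint 0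
    have : IsProbabilityMeasure (κ.withDensity fun x => ENNReal.ofReal (ρ x)) := by
      constructor
      rw [withDensity_apply _ MeasurableSet.univ, Measure.restrict_univ,
        ← ofReal_integral_eq_lintegral_ofReal (integrable_of_integral_eq_one hρ_int) hρ_nonneg,
        hρ_int, ENNReal.ofReal_one]
    exact Measure.isProbabilityMeasure_map hX.aemeasurable
  measure_compl := by
    rw [Measure.map_apply hX hs.compl]
    refine (ae_withDensity_iff hρ.ennreal_ofReal).2 ?_
    filter_upwards [hXs] with x hx hρx
    exact hx fun h0 => hρx (by simp [h0])
  integral_pow n := by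
    rw [integral_map hX.aemeasurable (by fun_prop),
      integral_withDensity_eq_integral_toReal_smul hρ.ennreal_ofReal (by simp), ← hint n]
    refine integral_congr_ae ?_
    filter_upwards [hρ_nonneg] with x hx
    rw [ENNReal.toReal_ofReal hx, smul_eq_mul, mul_comm]

end IsMomentMeasure

end MomentMeasure

section Beta

theorem beta_add_one_left {a b : ℝ} (ha : a ≠ 0) (hab : a + b ≠ 0) :
    beta (a + 1) b = a / (a + b) * beta a b := by
  rw [beta, beta, add_right_comm, Real.Gamma_add_one ha, Real.Gamma_add_one hab,
    div_mul_div_comm, mul_assoc]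

theorem betaPDFReal_nonneg {a b : ℝ} (ha : 0 < a) (hb : 0 < b) (x : ℝ) :
    0 ≤ betaPDFReal a b x := by
  by_cases hx : 0 < x ∧ x < 1
  · exact (betaPDFReal_pos hx.1 hx.2 ha hb).le
  · simp [betaPDFReal, hx]

theorem integral_betaPDFReal {a b : ℝ} (ha : 0 < a) (hb : 0 < b) :
    ∫ x, betaPDFReal a b x = 1 := by
  rw [integral_eq_lintegral_of_nonneg_ae (.of_forall (betaPDFReal_nonneg ha hb))
    (by fun_prop)]
  exact congrArg ENNReal.toReal (lintegral_betaPDF_eq_one ha hb)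

theorem pow_mul_betaPDFReal {a b : ℝ} (ha : 0 < a) (hb : 0 < b) (n : ℕ) (x : ℝ) :
    x ^ n * betaPDFReal a b x = beta (a + n) b / beta a b * betaPDFReal (a + n) b x := by
  unfold betaPDFReal
  split_ifs with hx
  · have h1 := (beta_pos ha hb).ne'
    have h2 := (beta_pos (by positivity : 0 < a + n) hb).ne'
    rw [add_sub_right_comm, rpow_add hx.1, rpow_natCast]
    field_simp
  · simp

theorem isMomentMeasure_betaMeasure {a b : ℝ} (ha : 0 < a) (hb : 0 < b) :
    IsMomentMeasure (betaMeasure a b) (Icc 0 1) fun n => beta (a + n) b / beta a b := by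
  rw [← Measure.map_id (μ := betaMeasure a b)]
  refine .map_withDensity measurable_id (measurable_betaPDFReal a b)
    (.of_forall (betaPDFReal_nonneg ha hb)) measurableSet_Icc (.of_forall fun x hx => ?_)
    (by simp [(beta_pos ha hb).ne']) fun n => ?_
  · by_contra h
    exact hx (if_neg fun h' => h ⟨h'.1.le, h'.2.le⟩)
  · have hn : 0 < a + n := by positivity
    simp only [id, pow_mul_betaPDFReal ha hb]
    rw [integral_const_mul, integral_betaPDFReal hn hb, mul_one]

theorem beta_div_beta_eq_gbinom {r : ℝ} (hr1 : -1 < r) (hr2 : r < 0) (n : ℕ) :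
    beta (1 + r + n) (-r) / beta (1 + r) (-r) = gbinom (n + r) n := by
  have hr : 0 < 1 + r := by linarith
  induction n with
  | zero => simp [gbinom_zero, (beta_pos hr (neg_pos.2 hr2)).ne']
  | succ n ih =>
    have h1 : 1 + r + n ≠ 0 := by positivity
    have h2 : 1 + r + n + -r ≠ 0 := by ring_nf; positivity
    rw [Nat.cast_succ, ← add_assoc, beta_add_one_left h1 h2, mul_div_assoc, ih,
      gbinom_succ_sub_one]
    ring_nf

end Beta

theorem integral_Ioo_of_hasDerivAt_of_nonneg {F F' : ℝ → ℝ} {a b A B : ℝ} (hab : a < b)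
    (hF : ∀ x ∈ Ioo a b, HasDerivAt F (F' x) x) (hF' : ∀ x ∈ Ioo a b, 0 ≤ F' x)
    (ha : Tendsto F (𝓝[>] a) (𝓝 A)) (hb : Tendsto F (𝓝[<] b) (𝓝 B)) :
    ∫ x in Ioo a b, F' x = B - A := by
  have hcont : ContinuousOn F (Ioo a b) := fun x hx => (hF x hx).continuousAt.continuousWithinAt
  have hint : IntegrableOn F' (Ioc a b) := by
    refine intervalIntegral.integrableOn_deriv_of_nonneg
      (continuousOn_Icc_extendFrom_Ioo hcont ha hb) (fun x hx => ?_) hF'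
    refine (hF x hx).congr_of_eventuallyEq ?_
    filter_upwards [Ioo_mem_nhds hx.1 hx.2] with y hy using extendFrom_extends hcont y hy
  rw [← integral_Ioc_eq_integral_Ioo, ← intervalIntegral.integral_of_le hab.le]
  exact intervalIntegral.integral_eq_sub_of_hasDerivAt_of_tendsto hab hF
    ((intervalIntegrable_iff_integrableOn_Ioc_of_le hab.le).2 hint) ha hb

section Primitive

/-- The horizontal strip `a < Im z < b`. -/
def horizontalStrip (a b : ℝ) : Set ℂ := Complex.im ⁻¹' Ioo a b

variable {a b : ℝ} {f G : ℂ → ℂ}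

theorem isOpen_horizontalStrip (a b : ℝ) : IsOpen (horizontalStrip a b) :=
  isOpen_Ioo.preimage Complex.continuous_im

theorem convex_horizontalStrip (a b : ℝ) : Convex ℝ (horizontalStrip a b) :=
  (convex_Ioo a b).linear_preimage Complex.imLm

theorem horizontalStrip_mono {c d : ℝ} (hca : c ≤ a) (hbd : b ≤ d) :
    horizontalStrip a b ⊆ horizontalStrip c d :=
  preimage_mono (Ioo_subset_Ioo hca hbd)

theorem ofReal_mem_horizontalStrip (h : (0 : ℝ) ∈ Ioo a b) (x : ℝ) :
    (x : ℂ) ∈ horizontalStrip a b := by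
  simpa [horizontalStrip] using h

theorem exists_hasDerivAt_im_ofReal_eq_zero {s : Set ℂ} (hs : Convex ℝ s) (hs_open : IsOpen s)
    (hs_real : ∀ x : ℝ, (x : ℂ) ∈ s) (hf : DifferentiableOn ℂ f s)
    (hf_real : ∀ x : ℝ, (f x).im = 0) :
    ∃ G : ℂ → ℂ, (∀ z ∈ s, HasDerivAt G (f z) z) ∧ ∀ x : ℝ, (G x).im = 0 := by
  obtain ⟨G, hG⟩ := hs.exists_forall_hasDerivWithinAt hf
  have hG' (z) (hz : z ∈ s) : HasDerivAt G (f z) z := (hG z hz).hasDerivAt (hs_open.mem_nhds hz)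
  have hG_im (x : ℝ) : HasDerivAt (fun y : ℝ => (G y).im) 0 x := by
    simpa [hf_real, Function.comp_def] using
      Complex.imCLM.hasFDerivAt.comp_hasDerivAt x (hG' x (hs_real x)).comp_ofReal
  have him_const (x : ℝ) : (G x).im = (G 0).im := by
    simpa using is_const_of_deriv_eq_zero (fun y => (hG_im y).differentiableAt)
      (fun y => (hG_im y).deriv) x 0
  exact ⟨fun z => G z - (G 0).im * Complex.I, fun z hz => (hG' z hz).sub_const _, by
    simp [him_const]⟩

theorem tendsto_im_comap_re_atBot_of_hasDerivAt (h0 : (0 : ℝ) ∈ Ioo a b)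
    (hG : ∀ z ∈ horizontalStrip a b, HasDerivAt G (f z) z) (hG_real : ∀ x : ℝ, (G x).im = 0)
    (hf : Tendsto f (comap Complex.re atBot ⊓ 𝓟 (horizontalStrip a b)) (𝓝 0)) :
    Tendsto (fun z => (G z).im) (comap Complex.re atBot ⊓ 𝓟 (horizontalStrip a b)) (𝓝 0) := by
  have hab : 0 < b - a := sub_pos.2 (h0.1.trans h0.2)
  refine Metric.tendsto_nhds.2 fun ε hε => ?_
  have hf_small := Metric.tendsto_nhds.1 hf (ε / (b - a)) (by positivity)
  simp only [dist_zero_right, eventually_inf_principal, eventually_comap,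
    eventually_atBot] at hf_small ⊢
  obtain ⟨x₀, hx₀⟩ := hf_small
  refine ⟨x₀, ?_⟩
  rintro _ hx z rfl hz
  have hconv : Convex ℝ (horizontalStrip a b ∩ Complex.re ⁻¹' Iic x₀) :=
    (convex_horizontalStrip a b).inter ((convex_Iic x₀).linear_preimage Complex.reLm)
  calc ‖(G z).im‖ = |(G z - G z.re).im| := by rw [Complex.sub_im, hG_real, sub_zero, norm_eq_abs]
    _ ≤ ‖G z - G z.re‖ := Complex.abs_im_le_norm _
    _ ≤ ε / (b - a) * ‖z - z.re‖ :=
      hconv.norm_image_sub_le_of_norm_hasDerivWithin_le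
        (fun w hw => (hG w hw.1).hasDerivWithinAt) (fun w hw => (hx₀ _ hw.2 w rfl hw.1).le)
        ⟨ofReal_mem_horizontalStrip h0 _, hx⟩ ⟨hz, hx⟩
    _ = ε / (b - a) * |z.im| := by
      rw [sub_eq_of_eq_add' (Complex.re_add_im z).symm]
      simp
    _ < ε / (b - a) * (b - a) := by
      gcongr
      exact abs_lt.2 ⟨by linarith [hz.1, h0.2], by linarith [hz.2, h0.1]⟩
    _ = ε := div_mul_cancel₀ ε hab.ne'

end Primitive

section RegularPart

theorem exp_ne_one_of_mem_horizontalStrip {z : ℂ} (hz : z ∈ horizontalStrip (-π) π)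
    (hz0 : z ≠ 0) : Complex.exp z ≠ 1 := by
  intro h
  have hlog := Complex.log_exp hz.1 hz.2.le
  rw [h, Complex.log_one] at hlog
  exact hz0 hlog.symm

theorem dslope_exp_ne_zero {z : ℂ} (hz : z ∈ horizontalStrip (-π) π) :
    dslope Complex.exp 0 z ≠ 0 := by
  rcases eq_or_ne z 0 with rfl | hz0
  · simp
  · rw [dslope_of_ne _ hz0, slope_def_field, Complex.exp_zero, sub_zero]
    exact div_ne_zero (sub_ne_zero.2 (exp_ne_one_of_mem_horizontalStrip hz hz0)) hz0

/-- The function `(exp (b z) - 1) exp z / (exp z - 1)` with its singularity at `0` removed. -/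
noncomputable def regularPart (b : ℝ) (z : ℂ) : ℂ :=
  dslope (fun z : ℂ => Complex.exp (b * z)) 0 z / dslope Complex.exp 0 z * Complex.exp z

variable {b : ℝ}

theorem regularPart_of_ne_zero {z : ℂ} (hz : z ≠ 0) :
    regularPart b z = (Complex.exp (b * z) - 1) / (Complex.exp z - 1) * Complex.exp z := by
  simp only [regularPart, dslope_of_ne _ hz, slope_def_field, Complex.exp_zero, sub_zero,
    mul_zero, div_div_div_cancel_right₀ hz]

theorem differentiableOn_regularPart (b : ℝ) :
    DifferentiableOn ℂ (regularPart b) (horizontalStrip (-π) π) := by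
  have differentiable_dslope {f : ℂ → ℂ} (hf : Differentiable ℂ f) :
      Differentiable ℂ (dslope f 0) := by
    rw [← differentiableOn_univ, Complex.differentiableOn_dslope univ_mem]
    exact hf.differentiableOn
  exact ((differentiable_dslope (by fun_prop)).differentiableOn.div
    (differentiable_dslope Complex.differentiable_exp).differentiableOn
    fun z hz => dslope_exp_ne_zero hz).mul Complex.differentiable_exp.differentiableOn

theorem regularPart_ofReal_im (b x : ℝ) : (regularPart b x).im = 0 := by
  rcases eq_or_ne x 0 with rfl | hx
  · have hderiv : deriv (fun z : ℂ => Complex.exp (b * z)) 0 = b := by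
      simpa using ((hasDerivAt_id (0 : ℂ)).const_mul (b : ℂ)).cexp.deriv
    simp [regularPart, hderiv]
  · rw [regularPart_of_ne_zero (Complex.ofReal_ne_zero.2 hx)]
    norm_cast

theorem tendsto_exp_mul_comap_re_atBot {a : ℝ} (ha : 0 < a) :
    Tendsto (fun z : ℂ => Complex.exp (a * z)) (comap Complex.re atBot) (𝓝 0) := by
  rw [Complex.tendsto_exp_nhds_zero_iff]
  simpa using tendsto_comap.const_mul_atBot ha

theorem tendsto_regularPart_comap_re_atBot (hb : -1 < b) :
    Tendsto (regularPart b) (comap Complex.re atBot) (𝓝 0) := by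
  have h := ((tendsto_exp_mul_comap_re_atBot (neg_lt_iff_pos_add.1 hb)).sub
    Complex.tendsto_exp_comap_re_atBot).div
      (Complex.tendsto_exp_comap_re_atBot.sub_const 1) (by simp)
  rw [sub_zero, zero_div] at h
  refine h.congr' ?_
  filter_upwards [tendsto_comap.eventually (eventually_lt_atBot 0)] with z hz
  rw [regularPart_of_ne_zero (ne_of_apply_ne Complex.re hz.ne), Pi.div_apply, div_mul_eq_mul_div,
    sub_mul, one_mul, ← Complex.exp_add]
  push_cast
  ring_nf

end RegularPart

section HasImIntegral

/-- `HasImIntegral f c` says that `Im ∫ f(u) du = c` along every path in the strip `0 < Im u < π`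
from a point of the positive real axis to `Re u = -∞`. It is encoded by a primitive of `f` whose
imaginary part vanishes on the positive real axis and tends to `c` as `Re u → -∞`. -/
def HasImIntegral (f : ℂ → ℂ) (c : ℝ) : Prop :=
  ∃ K : ℂ → ℂ, (∀ u ∈ horizontalStrip 0 π, HasDerivAt K (f u) u) ∧
    (∀ x : ℝ, 0 < x → Tendsto (fun u => (K u).im) (𝓝[horizontalStrip 0 π] x) (𝓝 0)) ∧
    Tendsto (fun u => (K u).im) (comap Complex.re atBot ⊓ 𝓟 (horizontalStrip 0 π)) (𝓝 c)

variable {f g : ℂ → ℂ} {c d : ℝ}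

namespace HasImIntegral

theorem add (hf : HasImIntegral f c) (hg : HasImIntegral g d) :
    HasImIntegral (fun u => f u + g u) (c + d) := by
  obtain ⟨K, hK, hK_real, hK_bot⟩ := hf
  obtain ⟨L, hL, hL_real, hL_bot⟩ := hg
  refine ⟨fun u => K u + L u, fun u hu => (hK u hu).add (hL u hu), fun x hx => ?_, ?_⟩
  · simpa using (hK_real x hx).add (hL_real x hx)
  · simpa using hK_bot.add hL_bot

theorem const_mul (a : ℝ) (hf : HasImIntegral f c) :
    HasImIntegral (fun u => a * f u) (a * c) := by
  obtain ⟨K, hK, hK_real, hK_bot⟩ := hf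
  refine ⟨fun u => a * K u, fun u hu => (hK u hu).const_mul _, fun x hx => ?_, ?_⟩
  · simpa using (hK_real x hx).const_mul a
  · simpa using hK_bot.const_mul a

theorem congr (hf : HasImIntegral f c) (hfg : EqOn f g (horizontalStrip 0 π)) :
    HasImIntegral g c := by
  obtain ⟨K, hK, hK_lim⟩ := hf
  exact ⟨K, fun u hu => hfg hu ▸ hK u hu, hK_lim⟩

theorem of_continuousAt {K : ℂ → ℂ} (hK : ∀ u ∈ horizontalStrip 0 π, HasDerivAt K (f u) u)
    (hK_cont : ∀ x : ℝ, 0 < x → ContinuousAt K x) (hK_real : ∀ x : ℝ, 0 < x → (K x).im = 0)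
    (hK_bot : Tendsto (fun u => (K u).im)
      (comap Complex.re atBot ⊓ 𝓟 (horizontalStrip 0 π)) (𝓝 c)) :
    HasImIntegral f c :=
  ⟨K, hK, fun x hx => hK_real x hx ▸
    (Complex.continuous_im.continuousAt.comp (hK_cont x hx)).tendsto.mono_left nhdsWithin_le_nhds,
    hK_bot⟩

end HasImIntegral

theorem exp_sub_one_im_pos {u : ℂ} (hu : u ∈ horizontalStrip 0 π) :
    0 < (Complex.exp u - 1).im := by
  rw [Complex.sub_im, Complex.one_im, sub_zero, Complex.exp_im]
  exact mul_pos (exp_pos _) (sin_pos_of_mem_Ioo hu)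

theorem exp_sub_one_ne_zero {u : ℂ} (hu : u ∈ horizontalStrip 0 π) : Complex.exp u - 1 ≠ 0 :=
  ne_of_apply_ne Complex.im (exp_sub_one_im_pos hu).ne'

theorem hasDerivAt_exp_sub_one (u : ℂ) :
    HasDerivAt (fun u => Complex.exp u - 1) (Complex.exp u) u :=
  (Complex.hasDerivAt_exp u).sub_const 1

theorem tendsto_exp_sub_one_comap_re_atBot :
    Tendsto (fun u : ℂ => Complex.exp u - 1) (comap Complex.re atBot) (𝓝 (-1)) := by
  simpa using Complex.tendsto_exp_comap_re_atBot.sub_const 1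

theorem exp_sub_one_pos {x : ℝ} (hx : 0 < x) : 0 < rexp x - 1 :=
  sub_pos.2 (one_lt_exp_iff.2 hx)

theorem hasImIntegral_exp_div_exp_sub_one :
    HasImIntegral (fun u => Complex.exp u / (Complex.exp u - 1)) π := by
  refine .of_continuousAt (K := fun u => Complex.log (Complex.exp u - 1))
    (fun u hu => (hasDerivAt_exp_sub_one u).clog (.inr (exp_sub_one_im_pos hu).ne'))
    (fun x hx => ?_) (fun x hx => ?_) ?_
  · refine ((hasDerivAt_exp_sub_one x).continuousAt).clog (.inl ?_)
    simpa [← Complex.ofReal_exp] using hx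
  · rw [Complex.log_im, ← Complex.ofReal_exp, ← Complex.ofReal_one, ← Complex.ofReal_sub,
      Complex.arg_ofReal_of_nonneg (exp_sub_one_pos hx).le]
  · have harg : Tendsto Complex.arg (𝓝[{z | 0 ≤ z.im}] (-1)) (𝓝 π) :=
      Complex.tendsto_arg_nhdsWithin_im_nonneg_of_re_neg_of_im_zero (by simp) (by simp)
    simp only [Complex.log_im]
    exact harg.comp (tendsto_nhdsWithin_iff.2
      ⟨tendsto_exp_sub_one_comap_re_atBot.mono_left inf_le_left,
        eventually_inf_principal.2 (.of_forall fun u hu => (exp_sub_one_im_pos hu).le)⟩)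

theorem hasImIntegral_regularPart {b : ℝ} (hb : -1 < b) : HasImIntegral (regularPart b) 0 := by
  have h0 : (0 : ℝ) ∈ Ioo (-π) π := ⟨neg_lt_zero.2 pi_pos, pi_pos⟩
  have hsub : horizontalStrip 0 π ⊆ horizontalStrip (-π) π :=
    horizontalStrip_mono h0.1.le le_rfl
  obtain ⟨G, hG, hG_real⟩ := exists_hasDerivAt_im_ofReal_eq_zero (convex_horizontalStrip (-π) π)
    (isOpen_horizontalStrip (-π) π) (ofReal_mem_horizontalStrip h0)
    (differentiableOn_regularPart b) (regularPart_ofReal_im b)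
  refine .of_continuousAt (fun u hu => hG u (hsub hu))
    (fun x _ => (hG x (ofReal_mem_horizontalStrip h0 x)).continuousAt)
    (fun x _ => hG_real x) ?_
  exact (tendsto_im_comap_re_atBot_of_hasDerivAt h0 hG hG_real
    ((tendsto_regularPart_comap_re_atBot hb).mono_left inf_le_left)).mono_left
      (inf_le_inf_left _ (principal_mono.2 hsub))

/-- The integrand of `C(a, n) = (2πi)⁻¹ ∮ z ^ a / (z - 1) ^ (n + 1) dz` in the variable
`u = log z`. -/
noncomputable def binomKernel (a : ℝ) (n : ℕ) (u : ℂ) : ℂ :=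
  Complex.exp (a * u) * Complex.exp u / (Complex.exp u - 1) ^ (n + 1)

theorem hasDerivAt_exp_mul_div_exp_sub_one_pow (a : ℝ) (n : ℕ) {u : ℂ}
    (hu : u ∈ horizontalStrip 0 π) :
    HasDerivAt (fun u => Complex.exp (a * u) / (Complex.exp u - 1) ^ (n + 1))
      (a * binomKernel (a - 1) n u - (n + 1) * binomKernel a (n + 1) u) u := by
  have hw := exp_sub_one_ne_zero hu
  have hnum : HasDerivAt (fun u : ℂ => Complex.exp (a * u)) (Complex.exp (a * u) * a) u := by
    simpa using ((hasDerivAt_id u).const_mul (a : ℂ)).cexp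
  have hden := (hasDerivAt_exp_sub_one u).fun_pow (n + 1)
  have hexp : Complex.exp ((a - 1 : ℝ) * u) * Complex.exp u = Complex.exp (a * u) := by
    rw [← Complex.exp_add]
    push_cast
    ring_nf
  refine (hnum.fun_div hden (pow_ne_zero _ hw)).congr_deriv ?_
  simp only [binomKernel, hexp, Nat.add_sub_cancel]
  push_cast
  field_simp
  ring

theorem hasImIntegral_deriv_exp_mul_div_exp_sub_one_pow {a : ℝ} (ha : 0 < a) (n : ℕ) :
    HasImIntegral (fun u => a * binomKernel (a - 1) n u - (n + 1) * binomKernel a (n + 1) u) 0 := by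
  refine .of_continuousAt
    (fun u hu => hasDerivAt_exp_mul_div_exp_sub_one_pow a n hu) (fun x hx => ?_) (fun x _ => ?_) ?_
  · have hne : Complex.exp x - 1 ≠ 0 := by
      exact_mod_cast (exp_sub_one_pos hx).ne'
    fun_prop (disch := exact pow_ne_zero _ hne)
  · norm_cast
  · have h := (tendsto_exp_mul_comap_re_atBot ha).div
      (tendsto_exp_sub_one_comap_re_atBot.pow (n + 1)) (pow_ne_zero _ (by simp))
    rw [zero_div] at h
    exact (Complex.continuous_im.tendsto 0).comp (h.mono_left inf_le_left)

theorem hasImIntegral_binomKernel (n : ℕ) {a : ℝ} (ha : -1 < a - n) :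
    HasImIntegral (binomKernel a n) (π * gbinom a n) := by
  induction n generalizing a with
  | zero =>
    rw [gbinom_zero, mul_one, ← add_zero π]
    refine (hasImIntegral_exp_div_exp_sub_one.add
      (hasImIntegral_regularPart (by simpa using ha))).congr fun u hu => ?_
    have hw := exp_sub_one_ne_zero hu
    simp only [regularPart_of_ne_zero (ne_of_apply_ne Complex.im hu.1.ne'), binomKernel]
    field_simp
    ring
  | succ n ih =>
    rw [Nat.cast_succ] at ha
    have ha0 : 0 < a := by linarith [n.cast_nonneg (α := ℝ)]
    have hn : (n : ℂ) + 1 ≠ 0 := Nat.cast_add_one_ne_zero n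
    have h := ((ih (a := a - 1) (by linarith)).const_mul (a / (n + 1))).add
      ((hasImIntegral_deriv_exp_mul_div_exp_sub_one_pow ha0 n).const_mul (-1 / (n + 1)))
    rw [mul_zero, add_zero, mul_left_comm, ← gbinom_succ_sub_one] at h
    refine h.congr fun u _ => ?_
    push_cast
    field_simp
    ring

theorem HasImIntegral.integral_eq {γ γ' : ℝ → ℂ} {a b x : ℝ} (hf : HasImIntegral f c)
    (hab : a < b) (hγ : ∀ t ∈ Ioo a b, γ t ∈ horizontalStrip 0 π)
    (hγ' : ∀ t ∈ Ioo a b, HasDerivAt γ (γ' t) t)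
    (hnonneg : ∀ t ∈ Ioo a b, 0 ≤ (f (γ t) * γ' t).im) (hx : 0 < x)
    (ha : Tendsto γ (𝓝[>] a) (𝓝 x)) (hb : Tendsto (fun t => (γ t).re) (𝓝[<] b) atBot) :
    ∫ t in Ioo a b, (f (γ t) * γ' t).im = c := by
  obtain ⟨K, hK, hK_real, hK_bot⟩ := hf
  rw [← sub_zero c]
  refine integral_Ioo_of_hasDerivAt_of_nonneg hab (F := fun t => (K (γ t)).im)
    (fun t ht => ?_) hnonneg ?_ ?_
  · exact Complex.imCLM.hasFDerivAt.comp_hasDerivAt t ((hK _ (hγ t ht)).comp t (hγ' t ht))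
  · refine (hK_real x hx).comp (tendsto_nhdsWithin_iff.2 ⟨ha, ?_⟩)
    filter_upwards [Ioo_mem_nhdsGT hab] using hγ
  · refine hK_bot.comp (tendsto_inf.2 ⟨tendsto_comap_iff.2 hb, tendsto_principal.2 ?_⟩)
    filter_upwards [Ioo_mem_nhdsLT hab] using hγ

end HasImIntegral

section SinePolar

/-- The curve in logarithmic coordinates whose exponential has modulus `sin (a φ) / sin (b φ)` and
argument `c φ`. By the law of sines, `exp (sinePolar p (p - 1) 1 φ)` is the vertex `z` of a triangle
`0, 1, z` with angle `φ` at `0` and exterior angle `p φ` at `1`. -/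
noncomputable def sinePolar (a b c φ : ℝ) : ℂ :=
  Real.log (sin (a * φ) / sin (b * φ)) + (c * φ : ℝ) * Complex.I

variable {a b c p φ : ℝ}

theorem exp_mul_sinePolar (h : 0 < sin (a * φ) / sin (b * φ)) (r : ℝ) :
    Complex.exp (r * sinePolar a b c φ) =
      ((sin (a * φ) / sin (b * φ)) ^ r : ℝ) * Complex.exp ((r * (c * φ) : ℝ) * Complex.I) := by
  rw [sinePolar, mul_add, Complex.exp_add, rpow_def_of_pos h]
  push_cast
  ring_nf

theorem exp_sinePolar (h : 0 < sin (a * φ) / sin (b * φ)) :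
    Complex.exp (sinePolar a b c φ) =
      (sin (a * φ) / sin (b * φ) : ℝ) * Complex.exp ((c * φ : ℝ) * Complex.I) := by
  simpa using exp_mul_sinePolar (c := c) h 1

theorem hasDerivAt_sinePolar (ha : sin (a * φ) ≠ 0) (hb : sin (b * φ) ≠ 0) :
    HasDerivAt (sinePolar a b c)
      ((a * cot (a * φ) - b * cot (b * φ) : ℝ) + c * Complex.I) φ := by
  have hsin (k : ℝ) : HasDerivAt (fun φ => sin (k * φ)) (cos (k * φ) * k) φ := by
    simpa using ((hasDerivAt_id φ).const_mul k).sin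
  have hlog := (((hsin a).fun_div (hsin b) hb).log (div_ne_zero ha hb)).ofReal_comp
  have harg := ((hasDerivAt_id φ).const_mul c).ofReal_comp.mul_const Complex.I
  refine (hlog.add harg).congr_deriv ?_
  rw [mul_one, cot_eq_cos_div_sin, cot_eq_cos_div_sin]
  congr 2
  generalize sin (b * φ) = s at hb ⊢
  field_simp

theorem tendsto_sinePolar_nhdsGT_zero (ha : a ≠ 0) (hb : b ≠ 0) (c : ℝ) :
    Tendsto (sinePolar a b c) (𝓝[>] 0) (𝓝 (Real.log (a / b))) := by
  have hsinc : ContinuousAt (fun φ => a * sinc (a * φ) / (b * sinc (b * φ))) 0 := by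
    fun_prop (disch := simpa)
  have hratio : Tendsto (fun φ => sin (a * φ) / sin (b * φ)) (𝓝[>] 0) (𝓝 (a / b)) := by
    have h := hsinc.tendsto.mono_left (nhdsWithin_le_nhds (s := Ioi 0))
    simp only [mul_zero, sinc_zero, mul_one] at h
    refine h.congr' ?_
    filter_upwards [self_mem_nhdsWithin] with φ (hφ : 0 < φ)
    rw [sinc_of_ne_zero (mul_ne_zero ha hφ.ne'), sinc_of_ne_zero (mul_ne_zero hb hφ.ne')]
    field_simp
  have harg : Tendsto (fun φ : ℝ => (c * φ : ℝ) * Complex.I) (𝓝[>] 0) (𝓝 0) :=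
    tendsto_nhdsWithin_of_tendsto_nhds (Continuous.tendsto' (by fun_prop) _ _ (by simp))
  rw [← add_zero (Complex.ofReal _)]
  exact ((Complex.continuous_ofReal.tendsto _).comp (hratio.log (div_ne_zero ha hb))).add harg

theorem sin_mul_exp_mul_I (α β : ℝ) :
    sin α * Complex.exp (β * Complex.I) = sin (α - β) + sin β * Complex.exp (α * Complex.I) := by
  apply Complex.ext <;>
    simp only [Complex.add_re, Complex.add_im, Complex.re_ofReal_mul, Complex.im_ofReal_mul,
      Complex.ofReal_re, Complex.ofReal_im, Complex.exp_ofReal_mul_I_re,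
      Complex.exp_ofReal_mul_I_im, sin_sub] <;>
    ring

theorem sin_mul_pos {k : ℝ} (hk : k ∈ Ioc 0 p) (hφ : φ ∈ Ioo 0 (π / p)) : 0 < sin (k * φ) := by
  refine sin_pos_of_pos_of_lt_pi (mul_pos hk.1 hφ.1) ?_
  calc k * φ ≤ p * φ := mul_le_mul_of_nonneg_right hk.2 hφ.1.le
    _ < π := (lt_div_iff₀' (hk.1.trans_le hk.2)).1 hφ.2

theorem sin_mul_nonneg {k : ℝ} (hk : k ∈ Icc 0 p) (hφ : φ ∈ Ioo 0 (π / p)) :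
    0 ≤ sin (k * φ) := by
  rcases hk.1.eq_or_lt with rfl | h0
  · simp
  · exact (sin_mul_pos ⟨h0, hk.2⟩ hφ).le

theorem mul_sin_le_sin_mul {l θ : ℝ} (hl : l ∈ Icc 0 1) (hθ : θ ∈ Icc 0 π) :
    l * sin θ ≤ sin (l * θ) := by
  simpa using strictConcaveOn_sin_Icc.concaveOn.2 (left_mem_Icc.2 pi_pos.le) hθ
    (sub_nonneg.2 hl.2) hl.1 (sub_add_cancel 1 l)

end SinePolar

section SineCurve

theorem sub_one_mem_Ioc {p : ℝ} (hp : 1 < p) : p - 1 ∈ Ioc 0 p :=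
  ⟨sub_pos.2 hp, sub_le_self p zero_le_one⟩

variable {p r φ : ℝ}

theorem sin_mul_div_sin_sub_one_mul_pos {k : ℝ} (hp : 1 < p) (hk : k ∈ Ioc 0 p)
    (hφ : φ ∈ Ioo 0 (π / p)) : 0 < sin (k * φ) / sin ((p - 1) * φ) :=
  div_pos (sin_mul_pos hk hφ) (sin_mul_pos (sub_one_mem_Ioc hp) hφ)

theorem exp_sinePolar_sub_one (hp : 1 < p) (hφ : φ ∈ Ioo 0 (π / p)) :
    Complex.exp (sinePolar p (p - 1) 1 φ) - 1 = Complex.exp (sinePolar 1 (p - 1) p φ) := by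
  have hne : (sin ((p - 1) * φ) : ℂ) ≠ 0 :=
    Complex.ofReal_ne_zero.2 (sin_mul_pos (sub_one_mem_Ioc hp) hφ).ne'
  have h := sin_mul_exp_mul_I (p * φ) (1 * φ)
  rw [← sub_mul] at h
  rw [exp_sinePolar (sin_mul_div_sin_sub_one_mul_pos hp (right_mem_Ioc.2 (one_pos.trans hp)) hφ),
    exp_sinePolar (sin_mul_div_sin_sub_one_mul_pos hp ⟨one_pos, hp.le⟩ hφ), Complex.ofReal_div,
    Complex.ofReal_div, div_mul_eq_mul_div, div_mul_eq_mul_div, sub_eq_iff_eq_add,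
    div_add_one hne, h, add_comm]

theorem hasDerivAt_sinePolar_of_mem_Ioc {k : ℝ} (hp : 1 < p) (hk : k ∈ Ioc 0 p)
    (hφ : φ ∈ Ioo 0 (π / p)) (c : ℝ) :
    HasDerivAt (sinePolar k (p - 1) c)
      ((k * cot (k * φ) - (p - 1) * cot ((p - 1) * φ) : ℝ) + c * Complex.I) φ :=
  hasDerivAt_sinePolar (sin_mul_pos hk hφ).ne' (sin_mul_pos (sub_one_mem_Ioc hp) hφ).ne'

theorem exp_sinePolar_mul_deriv (hp : 1 < p) (hφ : φ ∈ Ioo 0 (π / p)) :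
    Complex.exp (sinePolar p (p - 1) 1 φ) * deriv (sinePolar p (p - 1) 1) φ =
      Complex.exp (sinePolar 1 (p - 1) p φ) * deriv (sinePolar 1 (p - 1) p) φ := by
  have hu := hasDerivAt_sinePolar_of_mem_Ioc hp (right_mem_Ioc.2 (one_pos.trans hp)) hφ 1
  have hv := hasDerivAt_sinePolar_of_mem_Ioc hp ⟨one_pos, hp.le⟩ hφ p
  refine (hu.differentiableAt.hasDerivAt.cexp.sub_const 1).unique
    (hv.differentiableAt.hasDerivAt.cexp.congr_of_eventuallyEq ?_)
  filter_upwards [Ioo_mem_nhds hφ.1 hφ.2] with x hx using exp_sinePolar_sub_one hp hx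

/-- The value of `z ^ p / (z - 1)` at `z = exp (sinePolar p (p - 1) 1 φ)`. -/
noncomputable def binomPoint (p φ : ℝ) : ℝ :=
  (sin (p * φ) / sin ((p - 1) * φ)) ^ (p - 1) * (sin (p * φ) / sin φ)

/-- The density in the angle `φ` whose push-forward under `binomPoint p` has the moments
`gbinom (n * p + r) n`. -/
noncomputable def binomDensity (p r φ : ℝ) : ℝ :=
  (sin (p * φ) / sin ((p - 1) * φ)) ^ r *
    (sin ((r + 1) * φ) / sin φ + (p - 1) * (sin ((p - 1 - r) * φ) / sin ((p - 1) * φ))) / π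

theorem exp_mul_sinePolar_div_exp_sub_one (hp : 1 < p) (hφ : φ ∈ Ioo 0 (π / p)) :
    Complex.exp (p * sinePolar p (p - 1) 1 φ) / (Complex.exp (sinePolar p (p - 1) 1 φ) - 1) =
      binomPoint p φ := by
  have hp0 : 0 < p := one_pos.trans hp
  have hS := sin_mul_div_sin_sub_one_mul_pos hp (right_mem_Ioc.2 hp0) hφ
  have hT := sin_mul_div_sin_sub_one_mul_pos hp ⟨one_pos, hp.le⟩ hφ
  have hpow : (sin (p * φ) / sin ((p - 1) * φ)) ^ p /
      (sin (1 * φ) / sin ((p - 1) * φ)) = binomPoint p φ := by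
    rw [binomPoint, rpow_sub_one hS.ne', one_mul]
    have := (sin_mul_pos (right_mem_Ioc.2 hp0) hφ).ne'
    field_simp
  have hexp := exp_mul_sinePolar (c := 1) hS p
  rw [one_mul φ] at hexp
  rw [exp_sinePolar_sub_one hp hφ, hexp, exp_sinePolar hT,
    mul_div_mul_right _ _ (Complex.exp_ne_zero _), ← Complex.ofReal_div, hpow]

theorem mul_cos_add_cot_mul_sin_eq (hφ : sin φ ≠ 0) (hφ_sub : sin ((p - 1) * φ) ≠ 0) :
    p * cos (r * φ) + (cot φ - (p - 1) * cot ((p - 1) * φ)) * sin (r * φ) =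
      sin ((r + 1) * φ) / sin φ + (p - 1) * (sin ((p - 1 - r) * φ) / sin ((p - 1) * φ)) := by
  rw [cot_eq_cos_div_sin, cot_eq_cos_div_sin, sub_mul (p - 1) r, sin_sub, add_mul, one_mul,
    sin_add]
  generalize sin ((p - 1) * φ) = s at hφ_sub ⊢
  field_simp
  ring

theorem im_exp_mul_deriv_sinePolar (hp : 1 < p) (hφ : φ ∈ Ioo 0 (π / p)) :
    (Complex.exp (r * sinePolar p (p - 1) 1 φ) * deriv (sinePolar 1 (p - 1) p) φ).im =
      π * binomDensity p r φ := by
  have hsin : sin φ ≠ 0 := by simpa using (sin_mul_pos ⟨one_pos, hp.le⟩ hφ).ne'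
  have hsin_sub := (sin_mul_pos (sub_one_mem_Ioc hp) hφ).ne'
  rw [exp_mul_sinePolar (sin_mul_div_sin_sub_one_mul_pos hp
      (right_mem_Ioc.2 (one_pos.trans hp)) hφ),
    (hasDerivAt_sinePolar_of_mem_Ioc hp ⟨one_pos, hp.le⟩ hφ p).deriv, mul_assoc,
    Complex.im_ofReal_mul, binomDensity, mul_div_cancel₀ _ pi_ne_zero,
    ← mul_cos_add_cot_mul_sin_eq hsin hsin_sub, Complex.mul_im, Complex.exp_ofReal_mul_I_re,
    Complex.exp_ofReal_mul_I_im]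
  simp only [one_mul, Complex.add_re, Complex.add_im, Complex.ofReal_re, Complex.ofReal_im,
    Complex.re_ofReal_mul, Complex.im_ofReal_mul, Complex.I_re, Complex.I_im]
  ring

theorem im_binomKernel_mul_deriv_sinePolar (hp : 1 < p) (hφ : φ ∈ Ioo 0 (π / p)) (n : ℕ) :
    (binomKernel (n * p + r) n (sinePolar p (p - 1) 1 φ) * deriv (sinePolar p (p - 1) 1) φ).im =
      π * (binomPoint p φ ^ n * binomDensity p r φ) := by
  have hw : Complex.exp (sinePolar p (p - 1) 1 φ) - 1 ≠ 0 := by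
    rw [exp_sinePolar_sub_one hp hφ]
    exact Complex.exp_ne_zero _
  have hderiv : Complex.exp (sinePolar p (p - 1) 1 φ) * deriv (sinePolar p (p - 1) 1) φ =
      (Complex.exp (sinePolar p (p - 1) 1 φ) - 1) * deriv (sinePolar 1 (p - 1) p) φ := by
    rw [exp_sinePolar_sub_one hp hφ, exp_sinePolar_mul_deriv hp hφ]
  have hexp : Complex.exp ((n * p + r : ℝ) * sinePolar p (p - 1) 1 φ) =
      Complex.exp (p * sinePolar p (p - 1) 1 φ) ^ n *
        Complex.exp (r * sinePolar p (p - 1) 1 φ) := by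
    rw [← Complex.exp_nat_mul, ← Complex.exp_add]
    push_cast
    ring_nf
  calc (binomKernel (n * p + r) n (sinePolar p (p - 1) 1 φ) * deriv (sinePolar p (p - 1) 1) φ).im
    _ = (((Complex.exp (p * sinePolar p (p - 1) 1 φ) /
          (Complex.exp (sinePolar p (p - 1) 1 φ) - 1)) ^ n : ℂ) *
        (Complex.exp (r * sinePolar p (p - 1) 1 φ) * deriv (sinePolar 1 (p - 1) p) φ)).im := by
      rw [binomKernel, hexp, div_mul_eq_mul_div, mul_assoc, hderiv, div_pow, pow_succ]
      congr 1
      field_simp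
    _ = π * (binomPoint p φ ^ n * binomDensity p r φ) := by
      rw [exp_mul_sinePolar_div_exp_sub_one hp hφ, ← Complex.ofReal_pow, Complex.im_ofReal_mul,
        im_exp_mul_deriv_sinePolar hp hφ, mul_left_comm]

theorem binomDensity_nonneg (hp : 1 < p) (hr : r ∈ Icc (-1) (p - 1)) (hφ : φ ∈ Ioo 0 (π / p)) :
    0 ≤ binomDensity p r φ := by
  have hS := sin_mul_div_sin_sub_one_mul_pos hp (right_mem_Ioc.2 (one_pos.trans hp)) hφ
  have hsin : 0 < sin φ := by simpa using sin_mul_pos ⟨one_pos, hp.le⟩ hφ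
  have hsin_sub := sin_mul_pos (sub_one_mem_Ioc hp) hφ
  have h1 : 0 ≤ sin ((r + 1) * φ) :=
    sin_mul_nonneg ⟨by linarith [hr.1], by linarith [hr.2]⟩ hφ
  have h2 : 0 ≤ sin ((p - 1 - r) * φ) :=
    sin_mul_nonneg ⟨by linarith [hr.2], by linarith [hr.1]⟩ hφ
  have _hp1 : 0 ≤ p - 1 := (sub_pos.2 hp).le
  unfold binomDensity
  positivity

theorem mul_sin_mul_le_mul_sin_mul {k : ℝ} (hk : k ∈ Ioc 0 p) (hφ : φ ∈ Ioo 0 (π / p)) :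
    k * sin (p * φ) ≤ p * sin (k * φ) := by
  have hp : 0 < p := hk.1.trans_le hk.2
  have h := mul_sin_le_sin_mul (l := k / p) (θ := p * φ)
    ⟨div_nonneg hk.1.le hp.le, (div_le_one hp).2 hk.2⟩
    ⟨mul_nonneg hp.le hφ.1.le, ((lt_div_iff₀' hp).1 hφ.2).le⟩
  rwa [← mul_assoc, div_mul_cancel₀ _ hp.ne', div_mul_eq_mul_div, div_le_iff₀' hp] at h

theorem binomPoint_mem_Icc (hp : 1 < p) (hφ : φ ∈ Ioo 0 (π / p)) :
    binomPoint p φ ∈ Icc 0 (p ^ p * (p - 1) ^ (1 - p)) := by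
  have hp0 : 0 < p := one_pos.trans hp
  have hp1 : 0 < p - 1 := sub_pos.2 hp
  have hsin : 0 < sin φ := by simpa using sin_mul_pos ⟨one_pos, hp.le⟩ hφ
  have hsin_mul := sin_mul_pos (right_mem_Ioc.2 hp0) hφ
  have hsin_sub := sin_mul_pos (sub_one_mem_Ioc hp) hφ
  have hS : sin (p * φ) / sin ((p - 1) * φ) ≤ p / (p - 1) := by
    rw [div_le_div_iff₀ hsin_sub hp1, mul_comm]
    exact mul_sin_mul_le_mul_sin_mul (sub_one_mem_Ioc hp) hφ
  have hT : sin (p * φ) / sin φ ≤ p := by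
    simpa [div_le_iff₀ hsin] using mul_sin_mul_le_mul_sin_mul ⟨one_pos, hp.le⟩ hφ
  refine ⟨by unfold binomPoint; positivity, ?_⟩
  calc binomPoint p φ ≤ (p / (p - 1)) ^ (p - 1) * p := by
        unfold binomPoint
        gcongr
    _ = p ^ p * (p - 1) ^ (1 - p) := by
        rw [div_rpow hp0.le hp1.le, div_mul_eq_mul_div, ← rpow_add_one hp0.ne', sub_add_cancel,
          div_eq_mul_inv, ← rpow_neg hp1.le, neg_sub]

theorem tendsto_sinePolar_re_nhdsLT (hp : 1 < p) (c : ℝ) :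
    Tendsto (fun φ => (sinePolar p (p - 1) c φ).re) (𝓝[<] (π / p)) atBot := by
  have hp0 : 0 < p := one_pos.trans hp
  have hsin : sin ((p - 1) * (π / p)) ≠ 0 := by
    rw [sub_mul, one_mul, mul_div_cancel₀ _ hp0.ne', sin_pi_sub]
    exact (sin_pos_of_pos_of_lt_pi (by positivity) (div_lt_self pi_pos hp)).ne'
  have hcont : ContinuousAt (fun φ => sin (p * φ) / sin ((p - 1) * φ)) (π / p) := by
    fun_prop (disch := exact hsin)
  have hzero : sin (p * (π / p)) / sin ((p - 1) * (π / p)) = 0 := by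
    rw [mul_div_cancel₀ _ hp0.ne', sin_pi, zero_div]
  have hlog : Tendsto (fun φ => Real.log (sin (p * φ) / sin ((p - 1) * φ))) (𝓝[<] (π / p))
      atBot := by
    refine tendsto_log_nhdsGT_zero.comp (tendsto_nhdsWithin_iff.2 ⟨?_, ?_⟩)
    · exact hzero ▸ hcont.tendsto.mono_left nhdsWithin_le_nhds
    · filter_upwards [Ioo_mem_nhdsLT (show 0 < π / p by positivity)] with φ hφ
      exact sin_mul_div_sin_sub_one_mul_pos hp (right_mem_Ioc.2 hp0) hφ
  simpa [sinePolar] using hlog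

theorem integral_binomPoint_pow_mul_binomDensity (hp : 1 < p) (hr1 : -1 < r) (hr2 : r ≤ p - 1)
    (n : ℕ) :
    ∫ φ in Ioo 0 (π / p), binomPoint p φ ^ n * binomDensity p r φ = gbinom (n * p + r) n := by
  have hp0 : 0 < p := one_pos.trans hp
  have ha : -1 < n * p + r - n := by nlinarith [n.cast_nonneg (α := ℝ)]
  have h := (hasImIntegral_binomKernel n ha).integral_eq (γ := sinePolar p (p - 1) 1)
    (γ' := deriv (sinePolar p (p - 1) 1)) (div_pos pi_pos hp0) (fun φ hφ => ?_)
    (fun φ hφ => (hasDerivAt_sinePolar_of_mem_Ioc hp (right_mem_Ioc.2 hp0) hφ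
      1).differentiableAt.hasDerivAt)
    (fun φ hφ => ?_) (log_pos ((one_lt_div (sub_pos.2 hp)).2 (sub_one_lt p)))
    (tendsto_sinePolar_nhdsGT_zero hp0.ne' (sub_pos.2 hp).ne' 1) (tendsto_sinePolar_re_nhdsLT hp 1)
  · rw [setIntegral_congr_fun measurableSet_Ioo fun φ hφ =>
      im_binomKernel_mul_deriv_sinePolar hp hφ n, integral_const_mul] at h
    exact mul_left_cancel₀ pi_ne_zero h
  · simpa [sinePolar, horizontalStrip] using
      And.intro hφ.1 (hφ.2.trans (div_lt_self pi_pos hp))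
  · rw [im_binomKernel_mul_deriv_sinePolar hp hφ n]
    exact mul_nonneg pi_pos.le (mul_nonneg (pow_nonneg (binomPoint_mem_Icc hp hφ).1 n)
      (binomDensity_nonneg hp ⟨hr1.le, hr2⟩ hφ))

end SineCurve

section Existence

variable {p r : ℝ}

theorem exists_isMomentMeasure_of_one_lt (hp : 1 < p) (hr1 : -1 < r) (hr2 : r ≤ p - 1) :
    ∃ ν : Measure ℝ, IsMomentMeasure ν (Icc 0 (p ^ p * (p - 1) ^ (1 - p)))
      fun n => gbinom (n * p + r) n := by
  refine ⟨_, .map_withDensity (κ := volume.restrict (Ioo 0 (π / p))) (X := binomPoint p)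
    (ρ := binomDensity p r) (by unfold binomPoint; fun_prop) (by unfold binomDensity; fun_prop)
    ?_ measurableSet_Icc ?_ (by simp [gbinom_zero])
    (integral_binomPoint_pow_mul_binomDensity hp hr1 hr2)⟩
  · filter_upwards [ae_restrict_mem measurableSet_Ioo] with φ hφ
    exact binomDensity_nonneg hp ⟨hr1.le, hr2⟩ hφ
  · filter_upwards [ae_restrict_mem measurableSet_Ioo] with φ hφ _
    exact binomPoint_mem_Icc hp hφ

theorem exists_isMomentMeasure_one (hr1 : -1 < r) (hr2 : r ≤ 0) :
    ∃ ν : Measure ℝ, IsMomentMeasure ν (Icc 0 1) fun n => gbinom (n + r) n := by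
  rcases hr2.eq_or_lt with rfl | hr2
  · refine ⟨Measure.dirac 1, ?_⟩
    simpa [gbinom_natCast_self] using
      IsMomentMeasure.dirac measurableSet_Icc (right_mem_Icc.2 (zero_le_one' ℝ))
  · refine ⟨betaMeasure (1 + r) (-r), ?_⟩
    simpa only [beta_div_beta_eq_gbinom hr1 hr2] using
      isMomentMeasure_betaMeasure (neg_lt_iff_pos_add'.1 hr1) (neg_pos.2 hr2)

theorem exists_isMomentMeasure_of_neg_one_lt (hp : 1 ≤ p) (hr1 : -1 < r) (hr2 : r ≤ p - 1) :
    ∃ ν : Measure ℝ, IsMomentMeasure ν (Icc 0 (p ^ p * (p - 1) ^ (1 - p)))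
      fun n => gbinom (n * p + r) n := by
  rcases hp.eq_or_lt with rfl | hp
  · simpa using exists_isMomentMeasure_one hr1 (by simpa using hr2)
  · exact exists_isMomentMeasure_of_one_lt hp hr1 hr2

theorem gbinom_mul_sub_one (hp : p ≠ 0) (n : ℕ) :
    gbinom (n * p - 1) n = 1 / p * 0 ^ n + (1 - 1 / p) * gbinom (n * p) n := by
  rcases eq_or_ne n 0 with rfl | hn
  · simp [gbinom_zero]
  · have hn' : (n : ℝ) ≠ 0 := Nat.cast_ne_zero.2 hn
    refine mul_left_cancel₀ (mul_ne_zero hn' hp) ?_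
    rw [gbinom_sub_one, zero_pow hn]
    field_simp
    ring

theorem exists_isMomentMeasure (hp : 1 ≤ p) (hr1 : -1 ≤ r) (hr2 : r ≤ p - 1) :
    ∃ ν : Measure ℝ, IsMomentMeasure ν (Icc 0 (p ^ p * (p - 1) ^ (1 - p)))
      fun n => gbinom (n * p + r) n := by
  rcases hr1.eq_or_lt with rfl | hr1
  · obtain ⟨ν, hν⟩ := exists_isMomentMeasure_of_neg_one_lt hp neg_one_lt_zero (sub_nonneg.2 hp)
    have hp0 : 0 < p := one_pos.trans_le hp
    have h0 : (0 : ℝ) ∈ Icc 0 (p ^ p * (p - 1) ^ (1 - p)) := left_mem_Icc.2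
      (mul_nonneg (rpow_nonneg hp0.le p) (rpow_nonneg (sub_nonneg.2 hp) _))
    have h := (IsMomentMeasure.dirac measurableSet_Icc h0).convexCombination hν (t := 1 / p)
      ⟨by positivity, (div_le_one hp0).2 hp⟩
    simp only [add_zero, ← gbinom_mul_sub_one hp0.ne', sub_eq_add_neg (_ * p)] at h
    exact ⟨_, h⟩
  · exact exists_isMomentMeasure_of_neg_one_lt hp hr1 hr2

end Existence

theorem binom_moment_measure (p r : ℝ) (hp : 1 ≤ p) (hr1 : -1 ≤ r) (hr2 : r ≤ p - 1) :
    ∃! ν : Measure ℝ,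
      IsProbabilityMeasure ν ∧
      ν (Set.Icc 0 (p ^ p * (p - 1) ^ (1 - p)))ᶜ = 0 ∧
      ∀ n : ℕ, (∫ x, x ^ n ∂ν) = gbinom ((n : ℝ) * p + r) n := by
  obtain ⟨ν, hν⟩ := exists_isMomentMeasure hp hr1 hr2
  exact ⟨ν, ⟨hν.isProbabilityMeasure, hν.measure_compl, hν.integral_pow⟩,
    fun μ ⟨hμ_prob, hμ_compl, hμ_pow⟩ => IsMomentMeasure.eq ⟨hμ_prob, hμ_compl, hμ_pow⟩ hν⟩
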